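/- Let q ≥ 2, set d′ = 2^{q−1}, and let τ = (Z ⊗ 1_{d′})/√d ∈ σ_q. Let σ_{q−1} be the set of normalized non-identity Hermitian Pauli operators on q−1 qubits and V_d^{q−1} = span{σ⊗σ : σ ∈ σ_{q−1}} ⊆ M_{d′} ⊗ M_{d′}, and let V_[S]^τ = span{S_{σ′,σ′·τ} : σ′ ∈ C_τ}. Then the linear map θ determined by θ(σ⊗σ) = S_{(1₂/√2)⊗σ, (Z/√2)⊗σ} for σ ∈ σ_{q−1} is a well-defined linear isomorphism from V_d^{q−1} onto V_[S]^τ, and for every C in the (q−1)-qubit Clifford normalizer 𝒩_{q−1} and every σ ∈ σ_{q−1} one has θ((CσC†)⊗(CσC†)) = φ⊗²(1₂⊗C)(θ(σ⊗σ)). -/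

import Mathlib

open Matrix MeasureTheory
open scoped Kronecker

noncomputable section

namespace CliffordPaper

/-- The single-qubit Pauli matrices `1, X, Y, Z`. -/
def pauli1 : Fin 4 → Matrix (Fin 2) (Fin 2) ℂ :=
  ![1, !![0, 1; 1, 0], !![0, -Complex.I; Complex.I, 0], !![1, 0; 0, -1]]

/-- Index type for the computational basis of `q` qubits. -/
abbrev Idx (q : ℕ) := Fin q → Fin 2

/-- The space `M_d` of `d × d` complex matrices, `d = 2^q`. -/
abbrev Mat (q : ℕ) := Matrix (Idx q) (Idx q) ℂ

/-- The space `M_d ⊗ M_d`, realized as matrices indexed by the product index set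
(the tensor factors combine via the Kronecker product `⊗ₖ`). -/
abbrev BMat (q : ℕ) := Matrix (Idx q × Idx q) (Idx q × Idx q) ℂ

/-- The `q`-fold Kronecker product of single-qubit Paulis with labels `a`. -/
def PauliOp {q : ℕ} (a : Fin q → Fin 4) : Mat q :=
  Matrix.of fun x y => ∏ i, pauli1 (a i) (x i) (y i)

/-- `√d` as a complex number, where `d = 2^q`. -/
def sqrtd (q : ℕ) : ℂ := (Real.sqrt (2 ^ q) : ℝ)

/-- The set `σ̂_q` of normalized Pauli operators. -/
def sigmaHat (q : ℕ) : Set (Mat q) :=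
  {M | ∃ a : Fin q → Fin 4, M = (sqrtd q)⁻¹ • PauliOp a}

/-- The normalized identity `σ₀ = 1/√d`. -/
def sigma0 (q : ℕ) : Mat q := (sqrtd q)⁻¹ • (1 : Mat q)

/-- `σ_q = σ̂_q \ {σ₀}`. -/
def sigmaSet (q : ℕ) : Set (Mat q) := sigmaHat q \ {sigma0 q}

/-- `N_τ`: the normalized nonidentity Paulis anticommuting with `τ`. -/
def NSet {q : ℕ} (τ : Mat q) : Set (Mat q) :=
  {σ | σ ∈ sigmaSet q ∧ σ * τ + τ * σ = 0}

/-- `C_τ`: the normalized nonidentity Paulis distinct from `τ` commuting with `τ`. -/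
def CSet {q : ℕ} (τ : Mat q) : Set (Mat q) :=
  {σ | σ ∈ sigmaSet q ∧ σ ≠ τ ∧ σ * τ = τ * σ}

/-- `Ĉ_τ`: the normalized Paulis commuting with `τ`. -/
def CHatSet {q : ℕ} (τ : Mat q) : Set (Mat q) :=
  {σ | σ ∈ sigmaHat q ∧ σ * τ = τ * σ}

/-- The normalized product `σ·τ = √d στ`. -/
def nprod {q : ℕ} (σ τ : Mat q) : Mat q := sqrtd q • (σ * τ)

/-- The Clifford normalizer `𝒩_q`: unitaries mapping normalized Paulis to
signed normalized Paulis under conjugation. -/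
def Cliff (q : ℕ) : Set (Mat q) :=
  {U | U ∈ Matrix.unitaryGroup (Idx q) ℂ ∧
    ∀ σ ∈ sigmaHat q, ∃ τ ∈ sigmaHat q, U * σ * Uᴴ = τ ∨ U * σ * Uᴴ = -τ}

/-- The two-copy representation `φ⊗²(U) : A ⊗ B ↦ (UAU†) ⊗ (UBU†)`, extended linearly. -/
def twoCopy {q : ℕ} (U : Mat q) : BMat q →ₗ[ℂ] BMat q where
  toFun M := (U ⊗ₖ U) * M * (U ⊗ₖ U)ᴴ
  map_add' M N := by
    show (U ⊗ₖ U) * (M + N) * (U ⊗ₖ U)ᴴ = (U ⊗ₖ U) * M * (U ⊗ₖ U)ᴴ + (U ⊗ₖ U) * N * (U ⊗ₖ U)ᴴ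
    rw [Matrix.mul_add, Matrix.add_mul]
  map_smul' c M := by
    show (U ⊗ₖ U) * (c • M) * (U ⊗ₖ U)ᴴ = c • ((U ⊗ₖ U) * M * (U ⊗ₖ U)ᴴ)
    rw [Matrix.mul_smul, Matrix.smul_mul]

/-- The Hilbert–Schmidt inner product `⟨A, B⟩ = tr(A† B)`. -/
def hs {q : ℕ} (A B : BMat q) : ℂ := (Aᴴ * B).trace

/-- A subspace is invariant under the two-copy representation of `𝒩_q`. -/
def IsInvariant (q : ℕ) (W : Submodule ℂ (BMat q)) : Prop :=
  ∀ U ∈ Cliff q, ∀ v ∈ W, twoCopy U v ∈ W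

/-- A nonzero invariant subspace carries an irreducible subrepresentation. -/
def CarriesIrred (q : ℕ) (W : Submodule ℂ (BMat q)) : Prop :=
  W ≠ ⊥ ∧ IsInvariant q W ∧ ∀ W' ≤ W, IsInvariant q W' → W' = ⊥ ∨ W' = W

/-- Two invariant subspaces carry equivalent subrepresentations: there is a linear
isomorphism between them intertwining the two-copy representation. -/
def EquivRep (q : ℕ) (W W' : Submodule ℂ (BMat q)) : Prop :=
  ∃ T : BMat q →ₗ[ℂ] BMat q, Submodule.map T W = W' ∧
    (∀ x ∈ W, T x = 0 → x = 0) ∧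
    ∀ U ∈ Cliff q, ∀ x ∈ W, T (twoCopy U x) = twoCopy U (T x)

/-- `S_{σ,τ} = (σ⊗τ + τ⊗σ)/√2`. -/
def SVec {q : ℕ} (σ τ : Mat q) : BMat q :=
  ((Real.sqrt 2 : ℂ))⁻¹ • (σ ⊗ₖ τ + τ ⊗ₖ σ)

/-- `A_{σ,τ} = (σ⊗τ − τ⊗σ)/√2`. -/
def AVec {q : ℕ} (σ τ : Mat q) : BMat q :=
  ((Real.sqrt 2 : ℂ))⁻¹ • (σ ⊗ₖ τ - τ ⊗ₖ σ)

/-- The trivial sector `V_id`. -/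
def Vid (q : ℕ) : Submodule ℂ (BMat q) :=
  Submodule.span ℂ {sigma0 q ⊗ₖ sigma0 q}

/-- The right adjoint sector `V_r`. -/
def Vr (q : ℕ) : Submodule ℂ (BMat q) :=
  Submodule.span ℂ {M | ∃ τ ∈ sigmaSet q, M = sigma0 q ⊗ₖ τ}

/-- The left adjoint sector `V_l`. -/
def Vl (q : ℕ) : Submodule ℂ (BMat q) :=
  Submodule.span ℂ {M | ∃ τ ∈ sigmaSet q, M = τ ⊗ₖ sigma0 q}

/-- The diagonal sector `V_d`. -/
def Vdiag (q : ℕ) : Submodule ℂ (BMat q) :=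
  Submodule.span ℂ {M | ∃ τ ∈ sigmaSet q, M = τ ⊗ₖ τ}

/-- The symmetric commuting sector `V_[S]`. -/
def VScom (q : ℕ) : Submodule ℂ (BMat q) :=
  Submodule.span ℂ {M | ∃ τ ∈ sigmaSet q, ∃ σ ∈ CSet τ, M = SVec σ τ}

/-- The symmetric anti-commuting sector `V_{S}`. -/
def VSanti (q : ℕ) : Submodule ℂ (BMat q) :=
  Submodule.span ℂ {M | ∃ τ ∈ sigmaSet q, ∃ σ ∈ NSet τ, M = SVec σ τ}

/-- The antisymmetric commuting sector `V_[A]`. -/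
def VAcom (q : ℕ) : Submodule ℂ (BMat q) :=
  Submodule.span ℂ {M | ∃ τ ∈ sigmaSet q, ∃ σ ∈ CSet τ, M = AVec σ τ}

/-- The antisymmetric anti-commuting sector `V_{A}`. -/
def VAanti (q : ℕ) : Submodule ℂ (BMat q) :=
  Submodule.span ℂ {M | ∃ τ ∈ sigmaSet q, ∃ σ ∈ NSet τ, M = AVec σ τ}

/-- `V_[A]` presented with the spanning vectors `A_{σ,σ·τ}`, `σ ∈ C_τ`. -/
def VAcom' (q : ℕ) : Submodule ℂ (BMat q) :=
  Submodule.span ℂ {M | ∃ τ ∈ sigmaSet q, ∃ σ ∈ CSet τ, M = AVec σ (nprod σ τ)}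

/-- `V_0 = span{Σ_{σ∈σ_q} σ⊗σ}`. -/
def V0diag (q : ℕ) : Submodule ℂ (BMat q) :=
  Submodule.span ℂ {∑ᶠ σ ∈ sigmaSet q, σ ⊗ₖ σ}

/-- `V_1`, the "positive" part of the diagonal sector. -/
def V1diag (q : ℕ) : Submodule ℂ (BMat q) :=
  Submodule.span ℂ {v | ∃ lam : Mat q → ℂ,
    v = ∑ᶠ σ ∈ sigmaSet q, lam σ • (σ ⊗ₖ σ) ∧
    (∑ᶠ σ ∈ sigmaSet q, lam σ) = 0 ∧
    ∀ τ ∈ sigmaSet q, (∑ᶠ σ ∈ NSet τ, lam σ) = -((2 ^ q : ℂ) / 2) * lam τ}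

/-- `V_2`, the "negative" part of the diagonal sector. -/
def V2diag (q : ℕ) : Submodule ℂ (BMat q) :=
  Submodule.span ℂ {v | ∃ lam : Mat q → ℂ,
    v = ∑ᶠ σ ∈ sigmaSet q, lam σ • (σ ⊗ₖ σ) ∧
    (∑ᶠ σ ∈ sigmaSet q, lam σ) = 0 ∧
    ∀ τ ∈ sigmaSet q, (∑ᶠ σ ∈ NSet τ, lam σ) = ((2 ^ q : ℂ) / 2) * lam τ}

/-- `v^[adj]_τ = (2|C_τ|)^{-1/2} Σ_{σ∈C_τ} S_{σ,σ·τ}`. -/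
def vadjS {q : ℕ} (τ : Mat q) : BMat q :=
  ((Real.sqrt (2 * ((CSet τ).ncard : ℝ)) : ℂ))⁻¹ • ∑ᶠ σ ∈ CSet τ, SVec σ (nprod σ τ)

/-- `v^{adj}_τ = (2|N_τ|)^{-1/2} Σ_{σ∈N_τ} A_{σ,iσ·τ}`. -/
def vadjA {q : ℕ} (τ : Mat q) : BMat q :=
  ((Real.sqrt (2 * ((NSet τ).ncard : ℝ)) : ℂ))⁻¹ •
    ∑ᶠ σ ∈ NSet τ, AVec σ (Complex.I • nprod σ τ)

/-- The symmetric adjoint sector `V_[adj]`. -/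
def VadjS (q : ℕ) : Submodule ℂ (BMat q) :=
  Submodule.span ℂ {M | ∃ τ ∈ sigmaSet q, M = vadjS τ}

/-- The antisymmetric adjoint sector `V_{adj}`. -/
def VadjA (q : ℕ) : Submodule ℂ (BMat q) :=
  Submodule.span ℂ {M | ∃ τ ∈ sigmaSet q, M = vadjA τ}

/-- The orthogonal complement `V^⊥_{adj}` of `V_{adj}` inside `V_{A}`. -/
def VadjAperp (q : ℕ) : Submodule ℂ (BMat q) :=
  Submodule.span ℂ {v | v ∈ VAanti q ∧ ∀ w ∈ VadjA q, hs w v = 0}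

/-- `V_{1}^τ`. -/
def V1symτ (q : ℕ) (τ : Mat q) : Submodule ℂ (BMat q) :=
  Submodule.span ℂ {v | ∃ lam : Mat q → ℂ,
    v = ∑ᶠ σ ∈ NSet τ, lam σ • SVec σ (Complex.I • nprod σ τ) ∧
    ∀ ν ∈ NSet τ, (∑ᶠ σ ∈ NSet τ ∩ CSet ν, lam σ) - (∑ᶠ σ ∈ NSet τ ∩ NSet ν, lam σ)
      = ((2 ^ q : ℂ) / 2) * lam ν}

/-- `V_{2}^τ`. -/
def V2symτ (q : ℕ) (τ : Mat q) : Submodule ℂ (BMat q) :=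
  Submodule.span ℂ {v | ∃ lam : Mat q → ℂ,
    v = ∑ᶠ σ ∈ NSet τ, lam σ • SVec σ (Complex.I • nprod σ τ) ∧
    ∀ ν ∈ NSet τ, (∑ᶠ σ ∈ NSet τ ∩ CSet ν, lam σ) - (∑ᶠ σ ∈ NSet τ ∩ NSet ν, lam σ)
      = -((2 ^ q : ℂ) / 2) * lam ν}

/-- `V_{1} = ⊕_τ V_{1}^τ`. -/
def V1sym (q : ℕ) : Submodule ℂ (BMat q) := ⨆ τ ∈ sigmaSet q, V1symτ q τ

/-- `V_{2} = ⊕_τ V_{2}^τ`. -/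
def V2sym (q : ℕ) : Submodule ℂ (BMat q) := ⨆ τ ∈ sigmaSet q, V2symτ q τ

/-- The defining property of the map `Θ` on `V_[A]`. -/
def ThetaProp (q : ℕ) (Θ : BMat q →ₗ[ℂ] BMat q) : Prop :=
  ∀ τ ∈ sigmaSet q, ∀ σ ∈ CSet τ,
    Θ (AVec σ (nprod σ τ)) =
      (∑ᶠ σ' ∈ NSet τ ∩ CSet σ, AVec σ' (Complex.I • nprod σ' τ)) -
      ∑ᶠ σ' ∈ NSet τ ∩ NSet σ, AVec σ' (Complex.I • nprod σ' τ)

/-- `V` = span of off-diagonal products `σ⊗σ̂`, `σ ≠ σ̂`. -/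
def Voff (q : ℕ) : Submodule ℂ (BMat q) :=
  Submodule.span ℂ {M | ∃ σ ∈ sigmaSet q, ∃ σ' ∈ sigmaSet q, σ ≠ σ' ∧ M = σ ⊗ₖ σ'}

/-- `V^τ` = span of the `σ⊗σ̂` with `σ·σ̂ ∈ {τ, −τ, iτ, −iτ}`. -/
def Vtau (q : ℕ) (τ : Mat q) : Submodule ℂ (BMat q) :=
  Submodule.span ℂ {M | ∃ σ ∈ sigmaSet q, ∃ σ' ∈ sigmaSet q,
    (nprod σ σ' = τ ∨ nprod σ σ' = -τ ∨ nprod σ σ' = Complex.I • τ ∨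
      nprod σ σ' = -(Complex.I • τ)) ∧ M = σ ⊗ₖ σ'}


/-!
Interchanging the middle tensor factors turns `S_{(1/√2)⊗σ, (Z/√2)⊗σ}` into
`S_{1/√2, Z/√2} ⊗ (σ ⊗ σ)`, so `θ` is the restriction of the map `M ↦ S_{1/√2, Z/√2} ⊗ M`. This map
is injective because its left factor is nonzero, and it commutes with conjugation by
`(1 ⊗ C) ⊗ (1 ⊗ C)`, which only acts on `M`. For its image, orthogonality of the Pauli operators
identifies `C_τ` with the `(1/√2)⊗σ` and `(Z/√2)⊗σ` for `σ ≠ σ₀`; multiplication by `τ`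
exchanges these two, so both give the same spanning vector.
-/

lemma exists_entry_ne_zero {l m α : Type*} [Zero α] {A : Matrix l m α} (hA : A ≠ 0) :
    ∃ i j, A i j ≠ 0 := by
  contrapose! hA
  exact Matrix.ext hA

section TensorAlong

variable {l m n l' m' n' R : Type*} [CommSemiring R]

/-- The Kronecker product `A ⊗ B`, with its rows and columns relabelled along an identification
`e` of the index type `n` with `l × m`; it realizes a tensor factorization of the matrices over `n`.
It is encoded as a bilinear map, so that fixing `A` gives a linear map in `B`. -/
def tensorAlong (e : n ≃ l × m) : Matrix l l R →ₗ[R] Matrix m m R →ₗ[R] Matrix n n R :=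
  kroneckerBilinear.compr₂ (reindexLinearEquiv R R e.symm e.symm).toLinearMap

lemma tensorAlong_apply (e : n ≃ l × m) (A : Matrix l l R) (B : Matrix m m R) (x y : n) :
    tensorAlong e A B x y = A (e x).1 (e y).1 * B (e x).2 (e y).2 :=
  rfl

lemma tensorAlong_mul [Fintype l] [Fintype m] [Fintype n] (e : n ≃ l × m)
    (A A' : Matrix l l R) (B B' : Matrix m m R) :
    tensorAlong e A B * tensorAlong e A' B' = tensorAlong e (A * A') (B * B') := by
  change ((A ⊗ₖ B).submatrix e e) * ((A' ⊗ₖ B').submatrix e e) = _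
  rw [submatrix_mul_equiv, ← mul_kronecker_mul]
  rfl

lemma conjTranspose_tensorAlong [StarRing R] (e : n ≃ l × m) (A : Matrix l l R)
    (B : Matrix m m R) : (tensorAlong e A B)ᴴ = tensorAlong e Aᴴ Bᴴ := by
  ext x y
  simp [tensorAlong_apply]

/-- Combines two tensor factorizations into one of the product system, with the first factors
collected on the left and the second factors on the right. -/
def prodFactorization (e : n ≃ l × m) (e' : n' ≃ l' × m') : n × n' ≃ (l × l') × (m × m') :=
  (e.prodCongr e').trans (.prodProdProdComm l m l' m')

lemma tensorAlong_kronecker_tensorAlong (e : n ≃ l × m) (e' : n' ≃ l' × m') (A : Matrix l l R)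
    (B : Matrix m m R) (A' : Matrix l' l' R) (B' : Matrix m' m' R) :
    tensorAlong e A B ⊗ₖ tensorAlong e' A' B' =
      tensorAlong (prodFactorization e e') (A ⊗ₖ A') (B ⊗ₖ B') := by
  ext x y
  simp only [tensorAlong_apply]
  exact mul_mul_mul_comm ..

lemma tensorAlong_left_injective [IsCancelMulZero R] (e : n ≃ l × m) {B : Matrix m m R}
    (hB : B ≠ 0) : Function.Injective fun A ↦ tensorAlong e A B := by
  obtain ⟨x, y, hxy⟩ := exists_entry_ne_zero hB
  intro A A' h
  ext i j
  have hentry := congrFun₂ h (e.symm (i, x)) (e.symm (j, y))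
  simp only [tensorAlong_apply, Equiv.apply_symm_apply] at hentry
  exact mul_right_cancel₀ hxy hentry

lemma tensorAlong_right_injective [IsCancelMulZero R] (e : n ≃ l × m) {A : Matrix l l R}
    (hA : A ≠ 0) : Function.Injective (tensorAlong (R := R) e A) := by
  obtain ⟨i, j, hij⟩ := exists_entry_ne_zero hA
  intro B B' h
  ext x y
  have hentry := congrFun₂ h (e.symm (i, x)) (e.symm (j, y))
  simp only [tensorAlong_apply, Equiv.apply_symm_apply] at hentry
  exact mul_left_cancel₀ hij hentry

end TensorAlong

section PiKronecker

variable {ι n R : Type*} [Fintype ι] [CommSemiring R]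

/-- The Kronecker product of a finite family of square matrices, as a matrix over `ι → n`. -/
def piKronecker (A : ι → Matrix n n R) : Matrix (ι → n) (ι → n) R :=
  .of fun x y ↦ ∏ i, A i (x i) (y i)

variable [DecidableEq ι] [Fintype n]

lemma piKronecker_mul (A B : ι → Matrix n n R) :
    piKronecker A * piKronecker B = piKronecker fun i ↦ A i * B i := by
  ext x z
  simp only [piKronecker, mul_apply, of_apply, ← Finset.prod_mul_distrib]
  exact (Fintype.prod_sum fun i j ↦ A i (x i) j * B i j (z i)).symm

lemma trace_piKronecker (A : ι → Matrix n n R) : (piKronecker A).trace = ∏ i, (A i).trace :=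
  (Fintype.prod_sum fun i j ↦ A i j j).symm

end PiKronecker

section Pauli

lemma trace_pauli1_mul_pauli1 (k l : Fin 4) :
    (pauli1 k * pauli1 l).trace = if k = l then 2 else 0 := by
  fin_cases k <;> fin_cases l <;> norm_num [pauli1, trace_fin_two]

lemma pauli1_three_mul_self : pauli1 3 * pauli1 3 = 1 := by
  simp [pauli1, one_fin_two]

lemma commute_pauli1_three_iff {k : Fin 4} : Commute (pauli1 k) (pauli1 3) ↔ k = 0 ∨ k = 3 := by
  refine ⟨fun h ↦ ?_, ?_⟩
  · have h01 := congrFun₂ h.eq 0 1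
    fin_cases k <;> simp [pauli1, neg_eq_iff_add_eq_zero, eq_neg_iff_add_eq_zero] at h01 ⊢
  · rintro (rfl | rfl)
    · exact Commute.one_left _
    · exact Commute.refl _

variable {q : ℕ}

lemma sqrtd_ne_zero (q : ℕ) : sqrtd q ≠ 0 := by
  simp [sqrtd]

lemma sqrtd_succ (q : ℕ) : sqrtd (q + 1) = Real.sqrt 2 * sqrtd q := by
  simp [sqrtd, pow_succ']

lemma PauliOp_zero : PauliOp (0 : Fin q → Fin 4) = 1 := by
  ext x y
  simp [PauliOp, pauli1, one_apply, Fintype.prod_ite_zero, funext_iff]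

lemma trace_PauliOp_mul_PauliOp (a b : Fin q → Fin 4) :
    (PauliOp a * PauliOp b).trace = if a = b then 2 ^ q else 0 := by
  change (piKronecker (fun i ↦ pauli1 (a i)) * piKronecker fun i ↦ pauli1 (b i)).trace = _
  simp [piKronecker_mul, trace_piKronecker, trace_pauli1_mul_pauli1, Fintype.prod_ite_zero,
    funext_iff]

lemma PauliOp_ne_zero (a : Fin q → Fin 4) : PauliOp a ≠ 0 := by
  intro h
  simpa [h] using (trace_PauliOp_mul_PauliOp a a).symm

lemma PauliOp_injective : Function.Injective (PauliOp (q := q)) := by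
  intro a b h
  by_contra hab
  have htrace := trace_PauliOp_mul_PauliOp a b
  rw [← h, trace_PauliOp_mul_PauliOp] at htrace
  simp [hab] at htrace

/-- The normalized Pauli operator of `σ̂_q` with labels `a`. -/
def normalizedPauli (a : Fin q → Fin 4) : Mat q := (sqrtd q)⁻¹ • PauliOp a

lemma normalizedPauli_zero : normalizedPauli (0 : Fin q → Fin 4) = sigma0 q := by
  rw [normalizedPauli, PauliOp_zero, sigma0]

lemma normalizedPauli_injective : Function.Injective (normalizedPauli (q := q)) :=
  (smul_right_injective _ (inv_ne_zero (sqrtd_ne_zero q))).comp PauliOp_injective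

lemma normalizedPauli_ne_zero (a : Fin q → Fin 4) : normalizedPauli a ≠ 0 :=
  smul_ne_zero (inv_ne_zero (sqrtd_ne_zero q)) (PauliOp_ne_zero a)

lemma normalizedPauli_mem_sigmaHat (a : Fin q → Fin 4) : normalizedPauli a ∈ sigmaHat q :=
  ⟨a, rfl⟩

lemma normalizedPauli_mem_sigmaSet_iff {a : Fin q → Fin 4} :
    normalizedPauli a ∈ sigmaSet q ↔ a ≠ 0 := by
  rw [sigmaSet, ← normalizedPauli_zero, Set.mem_sdiff, Set.mem_singleton_iff,
    normalizedPauli_injective.eq_iff]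
  exact and_iff_right (normalizedPauli_mem_sigmaHat a)

lemma trace_normalizedPauli_eq_zero_iff {a : Fin q → Fin 4} :
    (normalizedPauli a).trace = 0 ↔ a ≠ 0 := by
  have htrace : (PauliOp a).trace = if a = 0 then 2 ^ q else 0 := by
    simpa [PauliOp_zero] using trace_PauliOp_mul_PauliOp a 0
  simp [normalizedPauli, htrace, sqrtd_ne_zero]

lemma mem_sigmaSet_iff_trace_eq_zero {σ : Mat q} (hσ : σ ∈ sigmaHat q) :
    σ ∈ sigmaSet q ↔ σ.trace = 0 := by
  obtain ⟨a, rfl⟩ := hσ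
  exact normalizedPauli_mem_sigmaSet_iff.trans trace_normalizedPauli_eq_zero_iff.symm

end Pauli

section TwoCopies

variable {p q : ℕ}

lemma SVec_comm (σ τ : Mat q) : SVec σ τ = SVec τ σ := by
  rw [SVec, SVec, add_comm]

lemma SVec_tensorAlong {l : Type*} (e : Idx p ≃ l × Idx q) (A B : Matrix l l ℂ) (C : Mat q) :
    SVec (tensorAlong e A C) (tensorAlong e B C) =
      tensorAlong (prodFactorization e e) ((Real.sqrt 2 : ℂ)⁻¹ • (A ⊗ₖ B + B ⊗ₖ A)) (C ⊗ₖ C) := by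
  simp only [SVec, tensorAlong_kronecker_tensorAlong, map_smul, map_add, LinearMap.smul_apply,
    LinearMap.add_apply]

lemma twoCopy_apply (U : Mat q) (M : BMat q) : twoCopy U M = (U ⊗ₖ U) * M * (U ⊗ₖ U)ᴴ :=
  rfl

lemma twoCopy_kronecker (U A B : Mat q) :
    twoCopy U (A ⊗ₖ B) = (U * A * Uᴴ) ⊗ₖ (U * B * Uᴴ) := by
  rw [twoCopy_apply, conjTranspose_kronecker, ← mul_kronecker_mul, ← mul_kronecker_mul]

lemma twoCopy_tensorAlong_one {l : Type*} [DecidableEq l] (e : Idx p ≃ l × Idx q)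
    (C : Mat q) (S : Matrix (l × l) (l × l) ℂ) (M : BMat q) :
    twoCopy (tensorAlong e 1 C) (tensorAlong (prodFactorization e e) S M) =
      tensorAlong (prodFactorization e e) S (twoCopy C M) := by
  have : Fintype l := .ofSurjective (fun x ↦ (e x).1) (Prod.fst_surjective.comp e.surjective)
  simp only [twoCopy_apply, tensorAlong_kronecker_tensorAlong, conjTranspose_tensorAlong,
    tensorAlong_mul, one_kronecker_one, conjTranspose_one, one_mul, mul_one]

lemma exists_mem_sigmaSet_conj_eq {C σ : Mat q} (hC : C ∈ Cliff q) (hσ : σ ∈ sigmaSet q) :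
    ∃ ν ∈ sigmaSet q, C * σ * Cᴴ = ν ∨ C * σ * Cᴴ = -ν := by
  obtain ⟨hunitary, hpauli⟩ := hC
  obtain ⟨ν, hν, hconj⟩ := hpauli σ hσ.1
  have htrace : (C * σ * Cᴴ).trace = 0 := by
    rw [trace_mul_cycle, ← star_eq_conjTranspose, mem_unitaryGroup_iff'.1 hunitary, one_mul]
    exact (mem_sigmaSet_iff_trace_eq_zero hσ.1).1 hσ
  refine ⟨ν, (mem_sigmaSet_iff_trace_eq_zero hν).2 ?_, hconj⟩
  rcases hconj with h | h <;> simpa [h] using htrace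

lemma isInvariant_Vdiag (q : ℕ) : IsInvariant q (Vdiag q) := by
  intro C hC v hv
  refine (Submodule.span_le (p := (Vdiag q).comap (twoCopy C))).2 ?_ hv
  rintro _ ⟨σ, hσ, rfl⟩
  obtain ⟨ν, hν, hconj⟩ := exists_mem_sigmaSet_conj_eq hC hσ
  have hsq : twoCopy C (σ ⊗ₖ σ) = ν ⊗ₖ ν := by
    rw [twoCopy_kronecker]
    rcases hconj with h | h
    · rw [h]
    · rw [h]
      ext x y
      simp
  exact Submodule.subset_span ⟨ν, hν, hsq⟩

end TwoCopies

section FirstQubit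

variable {q : ℕ} (e : Idx (q + 1) ≃ Fin 2 × Idx q)

/-- The linear map `M ↦ S ⊗ M` where `S = S_{1/√2, Z/√2}` acts on the first qubits of the two
copies. It extends the isomorphism `θ` from the diagonal sector to all of `M_{d'} ⊗ M_{d'}`. -/
def theta : BMat q →ₗ[ℂ] BMat (q + 1) :=
  tensorAlong (prodFactorization e e)
    ((Real.sqrt 2 : ℂ)⁻¹ •
      (((Real.sqrt 2 : ℂ)⁻¹ • pauli1 0) ⊗ₖ ((Real.sqrt 2 : ℂ)⁻¹ • pauli1 3) +
        ((Real.sqrt 2 : ℂ)⁻¹ • pauli1 3) ⊗ₖ ((Real.sqrt 2 : ℂ)⁻¹ • pauli1 0)))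

lemma theta_kronecker_self (σ : Mat q) :
    theta e (σ ⊗ₖ σ) =
      SVec (tensorAlong e ((Real.sqrt 2 : ℂ)⁻¹ • pauli1 0) σ)
        (tensorAlong e ((Real.sqrt 2 : ℂ)⁻¹ • pauli1 3) σ) :=
  (SVec_tensorAlong e _ _ σ).symm

lemma theta_injective : Function.Injective (theta e) := by
  refine tensorAlong_right_injective _ fun h ↦ ?_
  have hentry := congrFun₂ h (0, 0) (0, 0)
  simp [pauli1, ← two_mul] at hentry

lemma theta_twoCopy (C : Mat q) (M : BMat q) :
    theta e (twoCopy C M) = twoCopy (tensorAlong e 1 C) (theta e M) :=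
  (twoCopy_tensorAlong_one e C _ M).symm

variable {e}

lemma PauliOp_vecCons (he : ∀ x, e x = (x 0, fun i ↦ x i.succ))
    (k : Fin 4) (b : Fin q → Fin 4) :
    PauliOp (vecCons k b) = tensorAlong e (pauli1 k) (PauliOp b) := by
  ext x y
  simp [PauliOp, tensorAlong_apply, he, Fin.prod_univ_succ]

lemma normalizedPauli_vecCons (he : ∀ x, e x = (x 0, fun i ↦ x i.succ))
    (k : Fin 4) (b : Fin q → Fin 4) :
    normalizedPauli (vecCons k b) =
      tensorAlong e ((Real.sqrt 2 : ℂ)⁻¹ • pauli1 k) (normalizedPauli b) := by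
  simp only [normalizedPauli, PauliOp_vecCons he, sqrtd_succ, map_smul, LinearMap.smul_apply,
    smul_smul, mul_inv]
  rw [mul_comm]

lemma normalizedPauli_vecCons_zero (he : ∀ x, e x = (x 0, fun i ↦ x i.succ))
    (k : Fin 4) :
    normalizedPauli (vecCons k 0) = (sqrtd (q + 1))⁻¹ • tensorAlong e (pauli1 k) 1 := by
  rw [normalizedPauli, PauliOp_vecCons he, PauliOp_zero]

lemma nprod_normalizedPauli_vecCons_zero (he : ∀ x, e x = (x 0, fun i ↦ x i.succ))
    (k l : Fin 4) (b : Fin q → Fin 4) :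
    nprod (normalizedPauli (vecCons k b)) (normalizedPauli (vecCons l 0)) =
      tensorAlong e ((Real.sqrt 2 : ℂ)⁻¹ • (pauli1 k * pauli1 l)) (normalizedPauli b) := by
  rw [normalizedPauli_vecCons he, normalizedPauli_vecCons_zero he, nprod, mul_smul_comm,
    smul_inv_smul₀ (sqrtd_ne_zero _), tensorAlong_mul, mul_one, smul_mul_assoc]

lemma commute_normalizedPauli_vecCons_zero_iff {k l : Fin 4} {b : Fin q → Fin 4} :
    Commute (normalizedPauli (vecCons k b)) (normalizedPauli (vecCons l 0)) ↔
      Commute (pauli1 k) (pauli1 l) := by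
  obtain ⟨e, he⟩ : ∃ e : Idx (q + 1) ≃ Fin 2 × Idx q, ∀ x, e x = (x 0, fun i ↦ x i.succ) :=
    ⟨(Fin.consEquiv fun _ ↦ Fin 2).symm, fun _ ↦ rfl⟩
  have hsqrt : (Real.sqrt 2 : ℂ)⁻¹ ≠ 0 := by simp
  rw [normalizedPauli_vecCons he, normalizedPauli_vecCons_zero he,
    Commute.smul_right_iff₀ (inv_ne_zero (sqrtd_ne_zero _)), commute_iff_eq, tensorAlong_mul,
    tensorAlong_mul, mul_one, one_mul,
    (tensorAlong_left_injective e (normalizedPauli_ne_zero b)).eq_iff, ← commute_iff_eq,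
    Commute.smul_left_iff₀ hsqrt]

lemma normalizedPauli_vecCons_mem_CSet_iff {k : Fin 4} {b : Fin q → Fin 4} :
    normalizedPauli (vecCons k b) ∈ CSet (normalizedPauli (vecCons 3 0)) ↔
      (k = 0 ∨ k = 3) ∧ b ≠ 0 := by
  change _ ∧ _ ≠ _ ∧ Commute _ _ ↔ _
  rw [normalizedPauli_mem_sigmaSet_iff, normalizedPauli_injective.ne_iff,
    commute_normalizedPauli_vecCons_zero_iff, commute_pauli1_three_iff, ← cons_zero_zero]
  simp only [Ne, vecCons_inj]
  constructor
  · rintro ⟨h0, h3, rfl | rfl⟩ <;> simp_all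
  · rintro ⟨rfl | rfl, hb⟩ <;> simp [hb]

lemma SVec_nprod_eq_theta (he : ∀ x, e x = (x 0, fun i ↦ x i.succ))
    {k : Fin 4} (hk : k = 0 ∨ k = 3) (b : Fin q → Fin 4) :
    SVec (normalizedPauli (vecCons k b))
        (nprod (normalizedPauli (vecCons k b)) (normalizedPauli (vecCons 3 0))) =
      theta e (normalizedPauli b ⊗ₖ normalizedPauli b) := by
  rw [nprod_normalizedPauli_vecCons_zero he, normalizedPauli_vecCons he, theta_kronecker_self]
  rcases hk with rfl | rfl
  · rw [show pauli1 0 * pauli1 3 = pauli1 3 from one_mul _]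
  · rw [show pauli1 3 * pauli1 3 = pauli1 0 from pauli1_three_mul_self, SVec_comm]

lemma map_theta_Vdiag (he : ∀ x, e x = (x 0, fun i ↦ x i.succ)) :
    (Vdiag q).map (theta e) =
      Submodule.span ℂ {M | ∃ σ ∈ CSet (normalizedPauli (vecCons 3 0)),
        M = SVec σ (nprod σ (normalizedPauli (vecCons 3 0)))} := by
  rw [Vdiag, Submodule.map_span]
  congr 1
  ext M
  constructor
  · rintro ⟨_, ⟨_, hσ, rfl⟩, rfl⟩
    obtain ⟨b, rfl⟩ := hσ.1
    have hb : b ≠ 0 := normalizedPauli_mem_sigmaSet_iff.1 hσ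
    exact ⟨normalizedPauli (vecCons 0 b),
      normalizedPauli_vecCons_mem_CSet_iff.2 ⟨.inl rfl, hb⟩,
      (SVec_nprod_eq_theta he (.inl rfl) b).symm⟩
  · rintro ⟨_, hσ, rfl⟩
    obtain ⟨a, rfl⟩ := hσ.1.1
    obtain ⟨k, b, rfl⟩ : ∃ k b, a = vecCons k b := ⟨_, _, (cons_head_tail a).symm⟩
    obtain ⟨hk, hb⟩ := normalizedPauli_vecCons_mem_CSet_iff.1 hσ
    exact ⟨_, ⟨_, normalizedPauli_mem_sigmaSet_iff.2 hb, rfl⟩, (SVec_nprod_eq_theta he hk b).symm⟩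

end FirstQubit

/-- for `q = q′ + 1 ≥ 2` and `τ = (Z ⊗ 1)/√d`, the map
`θ : σ⊗σ ↦ S_{(1/√2)⊗σ, (Z/√2)⊗σ}` is a linear isomorphism of the diagonal sector
`V_d^{q−1}` onto `V_[S]^τ`, intertwining the `(q−1)`-qubit Clifford action with the
action of `1₂ ⊗ C`.  Here `e` is the canonical identification of the `q`-qubit index
set with the product of the first-qubit and remaining-qubits index sets. -/
theorem statement14 (q' : ℕ) (hq' : 1 ≤ q')
    (e : (Fin (q' + 1) → Fin 2) ≃ Fin 2 × (Fin q' → Fin 2))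
    (he : ∀ x, e x = (x 0, fun i => x i.succ)) :
    let emb : Matrix (Fin 2) (Fin 2) ℂ → Mat q' → Mat (q' + 1) :=
      fun M2 C => Matrix.reindex e.symm e.symm (M2 ⊗ₖ C)
    let τ : Mat (q' + 1) := (sqrtd (q' + 1))⁻¹ • emb !![1, 0; 0, -1] 1
    let VScomτ : Submodule ℂ (BMat (q' + 1)) :=
      Submodule.span ℂ {M | ∃ σ' ∈ CSet τ, M = SVec σ' (nprod σ' τ)}
    (∃ θ : BMat q' →ₗ[ℂ] BMat (q' + 1), ∀ σ ∈ sigmaSet q',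
      θ (σ ⊗ₖ σ) =
        SVec (emb ((Real.sqrt 2 : ℂ)⁻¹ • 1) σ)
             (emb ((Real.sqrt 2 : ℂ)⁻¹ • !![1, 0; 0, -1]) σ)) ∧
    ∀ θ : BMat q' →ₗ[ℂ] BMat (q' + 1),
      (∀ σ ∈ sigmaSet q',
        θ (σ ⊗ₖ σ) =
          SVec (emb ((Real.sqrt 2 : ℂ)⁻¹ • 1) σ)
               (emb ((Real.sqrt 2 : ℂ)⁻¹ • !![1, 0; 0, -1]) σ)) →
      Submodule.map θ (Vdiag q') = VScomτ ∧
      (∀ x ∈ Vdiag q', θ x = 0 → x = 0) ∧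
      ∀ C ∈ Cliff q', ∀ σ ∈ sigmaSet q',
        θ ((C * σ * Cᴴ) ⊗ₖ (C * σ * Cᴴ)) = twoCopy (emb 1 C) (θ (σ ⊗ₖ σ)) := by
  intro emb τ VScomτ
  refine ⟨⟨theta e, fun σ _ ↦ theta_kronecker_self e σ⟩, fun θ hθ ↦ ?_⟩
  have hθ_eq : Set.EqOn θ (theta e) (Vdiag q') := by
    refine LinearMap.eqOn_span ?_
    rintro _ ⟨σ, hσ, rfl⟩
    exact (hθ σ hσ).trans (theta_kronecker_self e σ).symm
  have hmap : (Vdiag q').map θ = (Vdiag q').map (theta e) :=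
    SetLike.coe_injective hθ_eq.image_eq
  have hτ : normalizedPauli (vecCons 3 0) = τ := normalizedPauli_vecCons_zero he 3
  refine ⟨?_, fun x hx hx0 ↦ ?_, fun C hC σ hσ ↦ ?_⟩
  · rw [hmap, map_theta_Vdiag he, hτ]
  · exact theta_injective e ((hθ_eq hx).symm.trans (hx0.trans (map_zero _).symm))
  · have hσσ : σ ⊗ₖ σ ∈ Vdiag q' := Submodule.subset_span ⟨σ, hσ, rfl⟩
    rw [← twoCopy_kronecker, hθ_eq (isInvariant_Vdiag q' C hC _ hσσ), hθ_eq hσσ]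
    exact theta_twoCopy e C _

end CliffordPaper
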